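/- arXiv:1605.08288 — 4 statements merged into one kernel-verified Lean document; each statement's English description precedes it below -/
import Mathlib

section
/- Let E = (E, ≤, #) be an event structure and c a configuration of E. Let #(c) = {e' : there exists e ∈ c with e # e'}, and let E∖c be the event structure whose set of events is E ∖ (c ∪ #(c)) with the restrictions of ≤ and # to this set. Then the map c' ↦ c' ∖ c is an order isomorphism from the principal filter F(c) = {c' ∈ D(E) : c ⊆ c'}, ordered by inclusion, onto the domain D(E∖c), ordered by inclusion. -/
/-- An event structure `(E, ≤, #)`. -/
structure EventStructure where
  E : Type
  le : E → E → Prop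
  le_refl : ∀ e, le e e
  le_trans : ∀ e₁ e₂ e₃, le e₁ e₂ → le e₂ e₃ → le e₁ e₃
  le_antisymm : ∀ e₁ e₂, le e₁ e₂ → le e₂ e₁ → e₁ = e₂
  finite_below : ∀ e, {e' | le e' e}.Finite
  conflict : E → E → Prop
  conflict_irrefl : ∀ e, ¬ conflict e e
  conflict_symm : ∀ e₁ e₂, conflict e₁ e₂ → conflict e₂ e₁
  conflict_hereditary : ∀ e₁ e₂ e₃, conflict e₁ e₂ → le e₂ e₃ → conflict e₁ e₃

/-- A configuration: a finite, downward-closed, conflict-free set of events. -/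
def EventStructure.IsConfig (ES : EventStructure) (c : Set ES.E) : Prop :=
  c.Finite ∧ (∀ e ∈ c, ∀ e', ES.le e' e → e' ∈ c) ∧
    ∀ e ∈ c, ∀ e' ∈ c, ¬ ES.conflict e e'

/-- `#(c)`: the set of events in conflict with some event of `c`. -/
def EventStructure.conflictSet (ES : EventStructure) (c : Set ES.E) : Set ES.E :=
  {e' | ∃ e ∈ c, ES.conflict e e'}

/-- The events of the event structure `E ∖ c` rooted at the configuration `c`:
`E ∖ (c ∪ #(c))`. -/
def EventStructure.rootedEvents (ES : EventStructure) (c : Set ES.E) : Set ES.E :=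
  {e | e ∉ c ∧ e ∉ ES.conflictSet c}

/-- A configuration of the rooted event structure `E ∖ c`, whose events are
`E ∖ (c ∪ #(c))` and whose causality and conflict relations are the restrictions
of those of `E`. -/
def EventStructure.IsRootedConfig (ES : EventStructure) (c d : Set ES.E) : Prop :=
  d ⊆ ES.rootedEvents c ∧ d.Finite ∧
    (∀ e ∈ d, ∀ e' ∈ ES.rootedEvents c, ES.le e' e → e' ∈ d) ∧
    ∀ e ∈ d, ∀ e' ∈ d, ¬ ES.conflict e e'

/-!
The inverse map is `d ↦ c ∪ d`. Its value is downward closed because conflict is hereditary: an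
event below one of `E ∖ c` is not in `#(c)`, so it lies in `c` or is itself an event of `E ∖ c`.
-/

theorem sdiff_le_sdiff_iff_le_of_le {α : Type*} [GeneralizedCoheytingAlgebra α] {a b c : α}
    (hcb : c ≤ b) : a \ c ≤ b \ c ↔ a ≤ b := by
  rw [sdiff_le_iff, sup_sdiff_cancel_right hcb]

namespace EventStructure

variable {ES : EventStructure} {c c' d : Set ES.E} {e e' : ES.E}

theorem mem_conflictSet_of_le (he : e ∈ ES.conflictSet c) (hle : ES.le e e') :
    e' ∈ ES.conflictSet c := by
  obtain ⟨a, ha, hconflict⟩ := he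
  exact ⟨a, ha, ES.conflict_hereditary _ _ _ hconflict hle⟩

theorem mem_or_mem_rootedEvents_of_le (he : e ∈ ES.rootedEvents c) (hle : ES.le e' e) :
    e' ∈ c ∨ e' ∈ ES.rootedEvents c :=
  or_iff_not_imp_left.2 fun he' => ⟨he', fun h => he.2 (mem_conflictSet_of_le h hle)⟩

theorem not_conflict_of_mem_rootedEvents (he : e ∈ c) (he' : e' ∈ ES.rootedEvents c) :
    ¬ ES.conflict e e' :=
  fun hconflict => he'.2 ⟨e, he, hconflict⟩

theorem IsConfig.sdiff_subset_rootedEvents (hc' : ES.IsConfig c') (hcc' : c ⊆ c') :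
    c' \ c ⊆ ES.rootedEvents c := by
  rintro e ⟨he, hec⟩
  refine ⟨hec, ?_⟩
  rintro ⟨a, ha, hconflict⟩
  exact hc'.2.2 a (hcc' ha) e he hconflict

theorem IsConfig.isRootedConfig_sdiff (hc' : ES.IsConfig c') (hcc' : c ⊆ c') :
    ES.IsRootedConfig c (c' \ c) := by
  have hsubset := hc'.sdiff_subset_rootedEvents hcc'
  obtain ⟨hfinite, hlower, hfree⟩ := hc'
  exact ⟨hsubset, hfinite.sdiff,
    fun e he e' he' hle => ⟨hlower e he.1 e' hle, he'.1⟩,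
    fun e he e' he' => hfree e he.1 e' he'.1⟩

theorem IsRootedConfig.disjoint (hd : ES.IsRootedConfig c d) : Disjoint c d :=
  Set.disjoint_right.2 fun _ he => (hd.1 he).1

theorem IsConfig.union_isRootedConfig (hc : ES.IsConfig c) (hd : ES.IsRootedConfig c d) :
    ES.IsConfig (c ∪ d) := by
  obtain ⟨hc_finite, hc_lower, hc_free⟩ := hc
  obtain ⟨hd_rooted, hd_finite, hd_lower, hd_free⟩ := hd
  refine ⟨hc_finite.union hd_finite, ?lower, ?free⟩
  case lower =>
    rintro e (he | he) e' hle
    · exact Or.inl (hc_lower e he e' hle)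
    · exact (mem_or_mem_rootedEvents_of_le (hd_rooted he) hle).imp_right
        fun he' => hd_lower e he e' he' hle
  case free =>
    rintro e (he | he) e' (he' | he')
    · exact hc_free e he e' he'
    · exact not_conflict_of_mem_rootedEvents he (hd_rooted he')
    · exact fun hconflict => not_conflict_of_mem_rootedEvents he' (hd_rooted he)
        (ES.conflict_symm _ _ hconflict)
    · exact hd_free e he e' he'

end EventStructure

/-- The map `c' ↦ c' ∖ c` is an order isomorphism from the principal filter
`F(c) = {c' ∈ D(E) : c ⊆ c'}` (ordered by inclusion) onto the domain of the rooted
event structure `E ∖ c` (ordered by inclusion). -/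
theorem rooted_domain_iso (ES : EventStructure) (c : Set ES.E) (hc : ES.IsConfig c) :
    Set.BijOn (fun c' => c' \ c)
        {c' | ES.IsConfig c' ∧ c ⊆ c'} {d | ES.IsRootedConfig c d} ∧
      ∀ c₁ ∈ {c' | ES.IsConfig c' ∧ c ⊆ c'}, ∀ c₂ ∈ {c' | ES.IsConfig c' ∧ c ⊆ c'},
        (c₁ ⊆ c₂ ↔ c₁ \ c ⊆ c₂ \ c) := by
  constructor
  · have hinv : Set.InvOn (fun d => c ∪ d) (fun c' => c' \ c)
        {c' | ES.IsConfig c' ∧ c ⊆ c'} {d | ES.IsRootedConfig c d} :=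
      ⟨fun _ hc' => Set.union_sdiff_cancel hc'.2,
        fun _ hd => Set.union_sdiff_cancel_left hd.disjoint.inter_eq.subset⟩
    exact hinv.bijOn (fun _ hc' => hc'.1.isRootedConfig_sdiff hc'.2)
      fun _ hd => ⟨hc.union_isRootedConfig hd, Set.subset_union_left⟩
  · exact fun _ _ _ hc₂ => (sdiff_le_sdiff_iff_le_of_le hc₂.2).symm
end

section
/- For any median graph G and any vertex v of G, there exist an event structure E and a bijection ψ from the vertices of G onto the configurations of E such that ψ(v) = ∅ and, for all vertices x and y of G: x and y are adjacent in G with d(v,x) < d(v,y) if and only if ψ(y) = ψ(x) ∪ {e} for some event e ∉ ψ(x). (Every pointed median graph is isomorphic to the Hasse diagram of the domain of an event structure.) -/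
/-- The interval `I(u,v)` in a graph. -/
def gInterval {V : Type} (G : SimpleGraph V) (u v : V) : Set V :=
  {w | G.dist u w + G.dist w v = G.dist u v}

/-- A median graph: a connected graph in which every triple of vertices has a
unique median. -/
def IsMedianGraph {V : Type} (G : SimpleGraph V) : Prop :=
  G.Connected ∧ ∀ x y z : V, ∃! m : V,
    m ∈ gInterval G x y ∧ m ∈ gInterval G y z ∧ m ∈ gInterval G z x

/-!
The halfspaces of a median graph are the sets of vertices closer to one end of an edge than to the
other. Sliding an edge along the squares of the graph shows that a halfspace is cut out by every
edge leaving it, hence that halfspaces are convex. The events are the halfspaces avoiding the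
basepoint `v`, ordered by reverse inclusion, two of them being in conflict when they are disjoint,
and a vertex is sent to the set of events containing it.

Every configuration arises in this way: by the Helly property its events have a common vertex, and
we take the gate `y` of `v` in their intersection. If an event `H ∋ y` contained no event of the
configuration, the Helly property would give a vertex `x ∉ H` lying in all of them; but
`y ∈ I(v, x)`, and the complement of `H` is convex and contains both `v` and `x`.
-/

section Geodesics

variable {V : Type} {G : SimpleGraph V} {a b w x y z : V} {S T : Set V}

theorem mem_gInterval : w ∈ gInterval G x y ↔ G.dist x w + G.dist w y = G.dist x y := Iff.rfl

theorem gInterval_comm (G : SimpleGraph V) (x y : V) : gInterval G x y = gInterval G y x := by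
  ext w
  rw [mem_gInterval, mem_gInterval, add_comm, G.dist_comm (u := w), G.dist_comm (u := x),
    G.dist_comm (u := x)]

theorem mem_gInterval_iff_of_adj (h : G.Adj x w) :
    w ∈ gInterval G x z ↔ G.dist z w + 1 = G.dist z x := by
  rw [mem_gInterval, SimpleGraph.dist_eq_one_iff_adj.2 h, G.dist_comm (u := w),
    G.dist_comm (u := x), add_comm]

theorem exists_adj_mem_gInterval (hG : G.Connected) (hxz : x ≠ z) :
    ∃ w, G.Adj x w ∧ w ∈ gInterval G x z := by
  obtain ⟨p, hp⟩ := hG.exists_walk_length_eq_dist x z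
  cases p with
  | nil => exact absurd rfl hxz
  | @cons _ w _ hxw q =>
    refine ⟨w, hxw, ?_⟩
    have hq : G.dist w z ≤ q.length := SimpleGraph.dist_le q
    have htri : G.dist x z ≤ G.dist x w + G.dist w z := hG.dist_triangle
    rw [SimpleGraph.Walk.length_cons] at hp
    rw [SimpleGraph.dist_eq_one_iff_adj.2 hxw] at htri
    rw [mem_gInterval, SimpleGraph.dist_eq_one_iff_adj.2 hxw]
    omega

/-- Convexity for the graph metric: the set contains every interval between two of its points. -/
def IsGeodesicallyConvex (G : SimpleGraph V) (S : Set V) : Prop :=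
  ∀ x ∈ S, ∀ y ∈ S, gInterval G x y ⊆ S

theorem isGeodesicallyConvex_univ : IsGeodesicallyConvex G Set.univ :=
  fun _ _ _ _ => Set.subset_univ _

theorem IsGeodesicallyConvex.inter (hS : IsGeodesicallyConvex G S)
    (hT : IsGeodesicallyConvex G T) : IsGeodesicallyConvex G (S ∩ T) :=
  fun x hx y hy => Set.subset_inter (hS x hx.1 y hy.1) (hT x hx.2 y hy.2)

theorem IsGeodesicallyConvex.biInter {ι : Type*} {t : Set ι} {s : ι → Set V}
    (hs : ∀ i ∈ t, IsGeodesicallyConvex G (s i)) : IsGeodesicallyConvex G (⋂ i ∈ t, s i) :=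
  fun x hx y hy => Set.subset_iInter₂ fun i hi =>
    hs i hi x (Set.mem_iInter₂.1 hx i hi) y (Set.mem_iInter₂.1 hy i hi)

theorem isGeodesicallyConvex_of_adj (hG : G.Connected)
    (hS : ∀ x ∈ S, ∀ y ∈ S, ∀ w, G.Adj x w → w ∈ gInterval G x y → w ∈ S) :
    IsGeodesicallyConvex G S := by
  intro x hx y hy z hz
  induction hn : G.dist x z generalizing x with
  | zero => rwa [← hG.dist_eq_zero_iff.1 hn]
  | succ n ih =>
    have hxz : x ≠ z := by
      rintro rfl
      rw [SimpleGraph.dist_self] at hn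
      omega
    obtain ⟨w, hxw, hw⟩ := exists_adj_mem_gInterval hG hxz
    have hwy : G.dist w y ≤ G.dist w z + G.dist z y := hG.dist_triangle
    have hxy : G.dist x y ≤ G.dist x w + G.dist w y := hG.dist_triangle
    have hxw1 : G.dist x w = 1 := SimpleGraph.dist_eq_one_iff_adj.2 hxw
    rw [mem_gInterval] at hz hw
    refine ih w (hS x hx y hy w hxw ?_) ?_ ?_
    · rw [mem_gInterval]; omega
    · rw [mem_gInterval]; omega
    · omega

/-- The vertices strictly closer to `a` than to `b`; this is the halfspace `W(a, b)` of the
literature when `a` and `b` are adjacent. -/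
def halfspace (G : SimpleGraph V) (a b : V) : Set V := {x | G.dist x a < G.dist x b}

theorem mem_halfspace : x ∈ halfspace G a b ↔ G.dist x a < G.dist x b := Iff.rfl

theorem left_mem_halfspace (h : G.Adj a b) : a ∈ halfspace G a b := by
  rw [mem_halfspace, SimpleGraph.dist_self, SimpleGraph.dist_eq_one_iff_adj.2 h]
  exact one_pos

theorem right_notMem_halfspace : b ∉ halfspace G a b := by
  rw [mem_halfspace, SimpleGraph.dist_self]
  exact Nat.not_lt_zero _

theorem notMem_halfspace_of_mem (hx : x ∈ halfspace G a b) : x ∉ halfspace G b a :=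
  lt_asymm (mem_halfspace.1 hx)

theorem mem_halfspace_of_mem_gInterval (h : G.Adj x w) (hw : w ∈ gInterval G x y) :
    y ∈ halfspace G w x := by
  rw [mem_gInterval_iff_of_adj h] at hw
  rw [mem_halfspace]
  omega

/-- The halfspaces of `G`: the sets `W(a, b)` for the oriented edges `(a, b)`. -/
def IsHalfspace (G : SimpleGraph V) (S : Set V) : Prop :=
  ∃ a b, G.Adj a b ∧ S = halfspace G a b

theorem isHalfspace_halfspace (h : G.Adj a b) : IsHalfspace G (halfspace G a b) :=
  ⟨a, b, h, rfl⟩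

theorem IsHalfspace.nonempty (hS : IsHalfspace G S) : S.Nonempty := by
  obtain ⟨a, b, hab, rfl⟩ := hS
  exact ⟨a, left_mem_halfspace hab⟩

end Geodesics

namespace IsMedianGraph

variable {V : Type} {G : SimpleGraph V} {a b m p q u v x y : V} {S : Set V}

theorem dist_eq_dist_add_one_of_adj (hG : IsMedianGraph G) (x : V) (hab : G.Adj a b) :
    G.dist x a = G.dist x b + 1 ∨ G.dist x b = G.dist x a + 1 := by
  obtain ⟨m, hm_ab, hm_bx, hm_xa⟩ := (hG.2 a b x).exists
  rw [mem_gInterval] at hm_ab hm_bx hm_xa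
  have hab1 : G.dist a b = 1 := SimpleGraph.dist_eq_one_iff_adj.2 hab
  have hm : m = a ∨ m = b := by
    rw [eq_comm, ← hG.1.dist_eq_zero_iff, ← hG.1.dist_eq_zero_iff]
    omega
  rcases hm with rfl | rfl
  · rw [G.dist_comm (v := m), hab1, G.dist_comm (u := m), G.dist_comm (u := b)] at hm_bx
    omega
  · rw [G.dist_comm (u := m), hab1] at hm_xa
    omega

theorem dist_eq_two (hG : IsMedianGraph G) (hxp : G.Adj x p) (hxq : G.Adj x q) (hpq : p ≠ q) :
    G.dist p q = 2 := by
  have hpx : G.dist p x = 1 := SimpleGraph.dist_eq_one_iff_adj.2 hxp.symm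
  have hpos : 0 < G.dist p q := hG.1.pos_dist_of_ne hpq
  have := hG.dist_eq_dist_add_one_of_adj p hxq
  omega

theorem exists_adj_adj_mem_gInterval (hG : IsMedianGraph G) (hxp : G.Adj x p) (hxq : G.Adj x q)
    (hpq : p ≠ q) (hp : p ∈ gInterval G x u) (hq : q ∈ gInterval G x u) :
    ∃ m, G.Adj p m ∧ G.Adj q m ∧ m ∈ gInterval G p u := by
  obtain ⟨m, hm_pq, hm_qu, hm_up⟩ := (hG.2 p q u).exists
  rw [mem_gInterval_iff_of_adj hxp] at hp
  rw [mem_gInterval_iff_of_adj hxq] at hq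
  rw [mem_gInterval, hG.dist_eq_two hxp hxq hpq] at hm_pq
  rw [mem_gInterval, G.dist_comm (u := q) (v := u), G.dist_comm (u := m) (v := u),
    G.dist_comm (u := q)] at hm_qu
  rw [mem_gInterval, G.dist_comm (u := m)] at hm_up
  have hpm : G.Adj p m := SimpleGraph.dist_eq_one_iff_adj.1 (by omega)
  have hmq : G.Adj m q := SimpleGraph.dist_eq_one_iff_adj.1 (by omega)
  refine ⟨m, hpm, hmq.symm, ?_⟩
  rw [mem_gInterval_iff_of_adj hpm, ← hm_up, SimpleGraph.dist_eq_one_iff_adj.2 hpm]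

theorem eq_of_adj_of_mem_gInterval (hG : IsMedianGraph G) (hpq : p ≠ q)
    (hpx : G.Adj p x) (hqx : G.Adj q x) (hpm : G.Adj p m) (hqm : G.Adj q m)
    (hx_pu : x ∈ gInterval G p u) (hx_qu : x ∈ gInterval G q u)
    (hm_pu : m ∈ gInterval G p u) (hm_qu : m ∈ gInterval G q u) : x = m := by
  have mem_gInterval_pq : ∀ {w}, G.Adj p w → G.Adj q w → w ∈ gInterval G p q := by
    intro w hpw hqw
    rw [mem_gInterval, SimpleGraph.dist_eq_one_iff_adj.2 hpw,
      SimpleGraph.dist_eq_one_iff_adj.2 hqw.symm, hG.dist_eq_two hpw.symm hqw.symm hpq]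
  exact (hG.2 p q u).unique ⟨mem_gInterval_pq hpx hqx, hx_qu, gInterval_comm G p u ▸ hx_pu⟩
    ⟨mem_gInterval_pq hpm hqm, hm_qu, gInterval_comm G p u ▸ hm_pu⟩

theorem compl_halfspace (hG : IsMedianGraph G) (hab : G.Adj a b) :
    (halfspace G a b)ᶜ = halfspace G b a := by
  ext x
  rw [Set.mem_compl_iff, mem_halfspace, mem_halfspace]
  have := hG.dist_eq_dist_add_one_of_adj x hab
  omega

theorem halfspace_subset_of_square (hG : IsMedianGraph G) (hxy : G.Adj x y) (hym : G.Adj y m)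
    (hmp : G.Adj m p) (hpx : G.Adj p x) (hxm : x ≠ m) (hyp : y ≠ p) :
    halfspace G x y ⊆ halfspace G p m := by
  intro u hu
  by_contra hu'
  rw [mem_halfspace] at hu hu'
  have h_ym := hG.dist_eq_dist_add_one_of_adj u hym
  have h_mp := hG.dist_eq_dist_add_one_of_adj u hmp
  have h_px := hG.dist_eq_dist_add_one_of_adj u hpx
  -- Both `x` and `m` are medians of `y`, `p`, `u`.
  have hx_yu : x ∈ gInterval G y u := (mem_gInterval_iff_of_adj hxy.symm).2 (by omega)
  have hx_pu : x ∈ gInterval G p u := (mem_gInterval_iff_of_adj hpx).2 (by omega)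
  have hm_yu : m ∈ gInterval G y u := (mem_gInterval_iff_of_adj hym).2 (by omega)
  have hm_pu : m ∈ gInterval G p u := (mem_gInterval_iff_of_adj hmp.symm).2 (by omega)
  exact hxm (hG.eq_of_adj_of_mem_gInterval hyp hxy.symm hpx hym hmp.symm hx_yu hx_pu hm_yu hm_pu)

theorem halfspace_eq_of_square (hG : IsMedianGraph G) (hxy : G.Adj x y) (hym : G.Adj y m)
    (hmp : G.Adj m p) (hpx : G.Adj p x) (hxm : x ≠ m) (hyp : y ≠ p) :
    halfspace G x y = halfspace G p m :=
  (hG.halfspace_subset_of_square hxy hym hmp hpx hxm hyp).antisymm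
    (hG.halfspace_subset_of_square hmp.symm hym.symm hxy.symm hpx.symm hyp.symm hxm.symm)

theorem mem_halfspace_iff_dist_add_one_eq (hG : IsMedianGraph G) (hab : G.Adj a b) :
    x ∈ halfspace G a b ↔ G.dist a x + 1 = G.dist b x := by
  have := hG.dist_eq_dist_add_one_of_adj x hab
  rw [mem_halfspace, G.dist_comm (u := a), G.dist_comm (u := b)]
  omega

theorem notMem_halfspace_iff_dist_add_one_eq (hG : IsMedianGraph G) (hab : G.Adj a b) :
    x ∉ halfspace G a b ↔ G.dist b x + 1 = G.dist a x := by
  rw [← Set.mem_compl_iff, hG.compl_halfspace hab, hG.mem_halfspace_iff_dist_add_one_eq hab.symm]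

theorem exists_square_of_mem_halfspace (hG : IsMedianGraph G) (hab : G.Adj a b)
    (hxy : G.Adj x y) (hx : x ∈ halfspace G a b) (hy : y ∉ halfspace G a b) (hxa : x ≠ a) :
    ∃ p m, G.Adj p x ∧ G.Adj p m ∧ G.Adj y m ∧ G.dist a p + 1 = G.dist a x ∧
      p ∈ halfspace G a b ∧ m ∉ halfspace G a b := by
  obtain ⟨p, hxp, hp⟩ := exists_adj_mem_gInterval hG.1 hxa
  rw [mem_gInterval_iff_of_adj hxp] at hp
  have hx_dist := (hG.mem_halfspace_iff_dist_add_one_eq hab).1 hx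
  have hy_dist := (hG.notMem_halfspace_iff_dist_add_one_eq hab).1 hy
  have ha_xy := hG.dist_eq_dist_add_one_of_adj a hxy
  have hb_xy := hG.dist_eq_dist_add_one_of_adj b hxy
  have hb_xp := hG.dist_eq_dist_add_one_of_adj b hxp
  have hp_mem : p ∈ halfspace G a b := by
    by_contra hp_notMem
    rw [hG.notMem_halfspace_iff_dist_add_one_eq hab] at hp_notMem
    omega
  have hp_dist := (hG.mem_halfspace_iff_dist_add_one_eq hab).1 hp_mem
  have hpy : p ≠ y := ne_of_mem_of_not_mem hp_mem hy
  obtain ⟨m, hpm, hym, hm⟩ := hG.exists_adj_adj_mem_gInterval (u := b) hxp hxy hpy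
    ((mem_gInterval_iff_of_adj hxp).2 (by omega)) ((mem_gInterval_iff_of_adj hxy).2 (by omega))
  rw [mem_gInterval_iff_of_adj hpm] at hm
  refine ⟨p, m, hxp.symm, hpm, hym, hp, hp_mem, fun hm_mem => ?_⟩
  rw [hG.mem_halfspace_iff_dist_add_one_eq hab] at hm_mem
  have ha_ym := hG.dist_eq_dist_add_one_of_adj a hym
  omega

theorem halfspace_eq_halfspace (hG : IsMedianGraph G) (hab : G.Adj a b) (hxy : G.Adj x y)
    (hx : x ∈ halfspace G a b) (hy : y ∉ halfspace G a b) :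
    halfspace G x y = halfspace G a b := by
  induction hn : G.dist a x generalizing x y with
  | zero =>
    obtain rfl : a = x := hG.1.dist_eq_zero_iff.1 hn
    rw [hG.notMem_halfspace_iff_dist_add_one_eq hab, SimpleGraph.dist_eq_one_iff_adj.2 hxy] at hy
    obtain rfl : b = y := hG.1.dist_eq_zero_iff.1 (by omega)
    rfl
  | succ n ih =>
    have hxa : x ≠ a := by
      rintro rfl
      rw [SimpleGraph.dist_self] at hn
      omega
    obtain ⟨p, m, hpx, hpm, hym, hp_dist, hp, hm⟩ :=
      hG.exists_square_of_mem_halfspace hab hxy hx hy hxa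
    calc halfspace G x y = halfspace G p m :=
          hG.halfspace_eq_of_square hxy hym hpm.symm hpx (ne_of_mem_of_not_mem hx hm)
            (ne_of_mem_of_not_mem hp hy).symm
      _ = halfspace G a b := ih hpm hp hm (by omega)

theorem isHalfspace_compl (hG : IsMedianGraph G) (hS : IsHalfspace G S) : IsHalfspace G Sᶜ := by
  obtain ⟨a, b, hab, rfl⟩ := hS
  exact ⟨b, a, hab.symm, hG.compl_halfspace hab⟩

theorem eq_halfspace_of_adj (hG : IsMedianGraph G) (hS : IsHalfspace G S) (hxy : G.Adj x y)
    (hx : x ∈ S) (hy : y ∉ S) : S = halfspace G x y := by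
  obtain ⟨a, b, hab, rfl⟩ := hS
  exact (hG.halfspace_eq_halfspace hab hxy hx hy).symm

theorem isGeodesicallyConvex_of_isHalfspace (hG : IsMedianGraph G) (hS : IsHalfspace G S) :
    IsGeodesicallyConvex G S := by
  refine isGeodesicallyConvex_of_adj hG.1 fun x hx y hy w hxw hw => ?_
  by_contra hwS
  have hy_xw : y ∈ halfspace G x w := hG.eq_halfspace_of_adj hS hxw hx hwS ▸ hy
  have hy_wx : y ∈ halfspace G w x := mem_halfspace_of_mem_gInterval hxw hw
  exact notMem_halfspace_of_mem hy_xw hy_wx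

theorem finite_setOf_isHalfspace_separating (hG : IsMedianGraph G) (x y : V) :
    {S | IsHalfspace G S ∧ x ∈ S ∧ y ∉ S}.Finite := by
  obtain ⟨p⟩ := hG.1 x y
  induction p with
  | nil => exact Set.finite_empty.subset fun S hS => hS.2.2 hS.2.1
  | @cons x w y hxw _ ih =>
    refine (ih.insert (halfspace G x w)).subset fun S ⟨hS, hx, hy⟩ => ?_
    by_cases hw : w ∈ S
    · exact Or.inr ⟨hS, hw, hy⟩
    · exact Or.inl (hG.eq_halfspace_of_adj hS hxw hx hw)

theorem eq_of_forall_isHalfspace (hG : IsMedianGraph G)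
    (h : ∀ S, IsHalfspace G S → y ∈ S → x ∈ S) : x = y := by
  by_contra hne
  obtain ⟨w, hxw, hw⟩ := exists_adj_mem_gInterval hG.1 hne
  exact right_notMem_halfspace
    (h _ (isHalfspace_halfspace hxw.symm) (mem_halfspace_of_mem_gInterval hxw hw))

theorem exists_gate (hG : IsMedianGraph G) (hS : IsGeodesicallyConvex G S) (hne : S.Nonempty)
    (v : V) : ∃ y ∈ S, ∀ x ∈ S, y ∈ gInterval G v x := by
  obtain ⟨y, hy, hmin⟩ : ∃ y ∈ S, ∀ x ∈ S, G.dist v y ≤ G.dist v x :=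
    ⟨Function.argminOn (G.dist v) S hne, Function.argminOn_mem _ _ _,
      fun _ hx => Function.argminOn_le _ _ hx⟩
  refine ⟨y, hy, fun x hx => ?_⟩
  obtain ⟨m, hm_vy, hm_yx, hm_xv⟩ := (hG.2 v y x).exists
  have hvm : G.dist v y ≤ G.dist v m := hmin m (hS y hy x hx hm_yx)
  rw [mem_gInterval] at hm_vy
  obtain rfl : m = y := hG.1.dist_eq_zero_iff.1 (by omega)
  rwa [gInterval_comm]

theorem convex_inter_inter_nonempty (hG : IsMedianGraph G) {A B C : Set V}
    (hA : IsGeodesicallyConvex G A) (hB : IsGeodesicallyConvex G B)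
    (hC : IsGeodesicallyConvex G C) (hAB : (A ∩ B).Nonempty) (hAC : (A ∩ C).Nonempty)
    (hBC : (B ∩ C).Nonempty) : (A ∩ B ∩ C).Nonempty := by
  obtain ⟨x, hxA, hxB⟩ := hAB
  obtain ⟨y, hyA, hyC⟩ := hAC
  obtain ⟨z, hzB, hzC⟩ := hBC
  obtain ⟨m, hm_xy, hm_yz, hm_zx⟩ := (hG.2 x y z).exists
  exact ⟨m, ⟨hA x hxA y hyA hm_xy, hB z hzB x hxB hm_zx⟩, hC y hyC z hzC hm_yz⟩

theorem convex_inter_biInter_nonempty (hG : IsMedianGraph G) {ι : Type*} {t : Set ι} (ht : t.Finite)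
    {s : ι → Set V} (hs : ∀ i ∈ t, IsGeodesicallyConvex G (s i))
    (hss : ∀ i ∈ t, ∀ j ∈ t, (s i ∩ s j).Nonempty) {C : Set V}
    (hC : IsGeodesicallyConvex G C) (hne : C.Nonempty) (hCs : ∀ i ∈ t, (C ∩ s i).Nonempty) :
    (C ∩ ⋂ i ∈ t, s i).Nonempty := by
  induction t, ht using Set.Finite.induction_on generalizing C with
  | empty => simpa only [Set.mem_empty_iff_false, Set.iInter_of_empty, Set.iInter_univ,
      Set.inter_univ] using hne
  | @insert i t _ _ ih =>
    have hi : i ∈ insert i t := Set.mem_insert i t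
    have ht : ∀ j ∈ t, j ∈ insert i t := fun j => Set.mem_insert_of_mem i
    rw [Set.biInter_insert, ← Set.inter_assoc]
    exact ih (fun j hj => hs j (ht j hj)) (fun j hj k hk => hss j (ht j hj) k (ht k hk))
      (hC.inter (hs i hi)) (hCs i hi) fun j hj =>
        hG.convex_inter_inter_nonempty hC (hs i hi) (hs j (ht j hj)) (hCs i hi) (hCs j (ht j hj))
          (hss i hi j (ht j hj))

/-- The event structure of a median graph pointed at `v`: its events are the halfspaces avoiding
`v`, a larger halfspace causes a smaller one, and disjoint halfspaces are in conflict. -/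
def eventStructure (hG : IsMedianGraph G) (v : V) : EventStructure where
  E := {S : Set V // IsHalfspace G S ∧ v ∉ S}
  le S T := T.1 ⊆ S.1
  le_refl _ := subset_rfl
  le_trans _ _ _ hST hTU := hTU.trans hST
  le_antisymm _ _ hST hTS := Subtype.ext (hTS.antisymm hST)
  finite_below S := by
    obtain ⟨a, ha⟩ := S.2.1.nonempty
    exact ((hG.finite_setOf_isHalfspace_separating a v).preimage
      Subtype.val_injective.injOn).subset fun T hST => ⟨T.2.1, hST ha, T.2.2⟩
  conflict S T := Disjoint S.1 T.1
  conflict_irrefl S hS := S.2.1.nonempty.ne_empty (disjoint_self.1 hS)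
  conflict_symm _ _ hST := hST.symm
  conflict_hereditary _ _ _ hST hTU := hST.mono_right hTU

/-- The configuration of a vertex `x`: the halfspaces separating `x` from the basepoint `v`. -/
def configuration (hG : IsMedianGraph G) (v x : V) : Set (hG.eventStructure v).E :=
  {e | x ∈ e.1}

theorem isConfig_configuration (hG : IsMedianGraph G) (v x : V) :
    (hG.eventStructure v).IsConfig (hG.configuration v x) := by
  refine ⟨?_, fun e he e' hle => hle he, fun e he e' he' hdisj =>
    Set.disjoint_left.1 hdisj he he'⟩
  exact ((hG.finite_setOf_isHalfspace_separating x v).preimage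
    Subtype.val_injective.injOn).subset fun e he => ⟨e.2.1, he, e.2.2⟩

theorem configuration_self (hG : IsMedianGraph G) (v : V) : hG.configuration v v = ∅ :=
  Set.eq_empty_of_forall_notMem fun e => e.2.2

theorem configuration_injective (hG : IsMedianGraph G) (v : V) :
    Function.Injective (hG.configuration v) := by
  intro x y hxy
  refine hG.eq_of_forall_isHalfspace fun S hS hyS => ?_
  by_cases hv : v ∈ S
  · by_contra hxS
    exact (Set.ext_iff.1 hxy ⟨Sᶜ, hG.isHalfspace_compl hS, not_not.2 hv⟩).1 hxS hyS
  · exact (Set.ext_iff.1 hxy ⟨S, hS, hv⟩).2 hyS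

theorem exists_configuration_eq (hG : IsMedianGraph G) {c : Set (hG.eventStructure v).E}
    (hc : (hG.eventStructure v).IsConfig c) : ∃ x, hG.configuration v x = c := by
  obtain ⟨hfin, hdown, hfree⟩ := hc
  have hconv : ∀ e ∈ c, IsGeodesicallyConvex G e.1 := fun e _ =>
    hG.isGeodesicallyConvex_of_isHalfspace e.2.1
  have hmeet : ∀ e ∈ c, ∀ e' ∈ c, (e.1 ∩ e'.1).Nonempty := fun e he e' he' =>
    Set.not_disjoint_iff_nonempty_inter.1 (hfree e he e' he')
  have hne : (⋂ e ∈ c, e.1).Nonempty := by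
    rw [← Set.univ_inter (⋂ e ∈ c, e.1)]
    refine hG.convex_inter_biInter_nonempty hfin hconv hmeet isGeodesicallyConvex_univ ⟨v, trivial⟩
      fun e _ => ?_
    rw [Set.univ_inter]
    exact e.2.1.nonempty
  obtain ⟨y, hy, hgate⟩ := hG.exists_gate (.biInter hconv) hne v
  rw [Set.mem_iInter₂] at hy
  refine ⟨y, Set.Subset.antisymm (fun H hyH => ?_) hy⟩
  obtain ⟨e, he, heH⟩ : ∃ e ∈ c, e.1 ⊆ H.1 := by
    by_contra! hnot
    have hHconv : IsGeodesicallyConvex G H.1ᶜ :=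
      hG.isGeodesicallyConvex_of_isHalfspace (hG.isHalfspace_compl H.2.1)
    obtain ⟨x, hxH, hx⟩ := hG.convex_inter_biInter_nonempty hfin hconv hmeet hHconv ⟨v, H.2.2⟩
      fun e he => by
        rw [Set.inter_comm]
        exact Set.inter_compl_nonempty_iff.2 (hnot e he)
    exact hHconv v H.2.2 x hxH (hgate x hx) hyH
  exact hdown e he H heH

theorem configuration_eq_insert (hG : IsMedianGraph G) (hxy : G.Adj x y)
    (hv : v ∉ halfspace G y x) :
    hG.configuration v y =
      insert ⟨halfspace G y x, isHalfspace_halfspace hxy.symm, hv⟩ (hG.configuration v x) := by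
  ext e
  refine ⟨fun hye => ?_, ?_⟩
  · by_cases hxe : x ∈ e.1
    · exact Or.inr hxe
    · exact Or.inl (Subtype.ext (hG.eq_halfspace_of_adj e.2.1 hxy.symm hye hxe))
  · rintro (rfl | hxe)
    · exact left_mem_halfspace hxy.symm
    · by_contra hye
      have hev : v ∉ halfspace G x y := hG.eq_halfspace_of_adj e.2.1 hxy hxe hye ▸ e.2.2
      rw [← Set.mem_compl_iff, hG.compl_halfspace hxy] at hev
      exact hv hev

theorem exists_configuration_eq_insert_of_adj (hG : IsMedianGraph G) (hxy : G.Adj x y)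
    (hlt : G.dist v x < G.dist v y) :
    ∃ e ∉ hG.configuration v x, hG.configuration v y = insert e (hG.configuration v x) :=
  ⟨_, right_notMem_halfspace, hG.configuration_eq_insert hxy hlt.not_gt⟩

theorem adj_and_dist_lt_of_configuration_eq_insert (hG : IsMedianGraph G)
    {e : (hG.eventStructure v).E} (he : e ∉ hG.configuration v x)
    (hins : hG.configuration v y = insert e (hG.configuration v x)) :
    G.Adj x y ∧ G.dist v x < G.dist v y := by
  have hxy : x ≠ y := by
    rintro rfl
    exact he (hins ▸ Set.mem_insert e _)
  obtain ⟨w, hxw, hw⟩ := exists_adj_mem_gInterval hG.1 hxy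
  have hy : y ∈ halfspace G w x := mem_halfspace_of_mem_gInterval hxw hw
  have hv : v ∈ halfspace G x w := by
    by_contra hv
    have hsub : hG.configuration v x ⊆ hG.configuration v y := hins ▸ Set.subset_insert e _
    exact notMem_halfspace_of_mem hy <|
      @hsub ⟨halfspace G x w, isHalfspace_halfspace hxw, hv⟩ (left_mem_halfspace hxw)
  have hw_config := hG.configuration_eq_insert hxw (notMem_halfspace_of_mem hv)
  have he_eq : ⟨halfspace G w x, isHalfspace_halfspace hxw.symm, notMem_halfspace_of_mem hv⟩ = e :=
    Set.eq_of_mem_insert_of_notMem (hins.subset hy) right_notMem_halfspace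
  obtain rfl : w = y := hG.configuration_injective v (by rw [hw_config, hins, he_eq])
  exact ⟨hxw, hv⟩

theorem adj_and_dist_lt_iff (hG : IsMedianGraph G) (v x y : V) :
    G.Adj x y ∧ G.dist v x < G.dist v y ↔
      ∃ e ∉ hG.configuration v x, hG.configuration v y = insert e (hG.configuration v x) :=
  ⟨fun h => hG.exists_configuration_eq_insert_of_adj h.1 h.2,
    fun ⟨_, he, hins⟩ => hG.adj_and_dist_lt_of_configuration_eq_insert he hins⟩

end IsMedianGraph

/-- Every pointed median graph is isomorphic to the Hasse diagram of the domain of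
an event structure: for any median graph `G` and any basepoint `v` there are an
event structure `E` and a bijection `ψ` from the vertices of `G` onto the
configurations of `E` with `ψ(v) = ∅`, such that `x` and `y` are adjacent with
`d(v,x) < d(v,y)` iff `ψ(y)` is obtained from `ψ(x)` by adding a single event. -/
theorem pointed_median_graph_is_event_domain {V : Type} (G : SimpleGraph V)
    (hG : IsMedianGraph G) (v : V) :
    ∃ (ES : EventStructure) (ψ : V → Set ES.E),
      (∀ x : V, ES.IsConfig (ψ x)) ∧
      Function.Injective ψ ∧
      (∀ c : Set ES.E, ES.IsConfig c → ∃ x : V, ψ x = c) ∧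
      ψ v = ∅ ∧
      ∀ x y : V,
        (G.Adj x y ∧ G.dist v x < G.dist v y) ↔ ∃ e ∉ ψ x, ψ y = insert e (ψ x) := by
  exact ⟨hG.eventStructure v, hG.configuration v, hG.isConfig_configuration v,
    hG.configuration_injective v, fun _ hc => hG.exists_configuration_eq hc,
    hG.configuration_self v, hG.adj_and_dist_lt_iff v⟩
end

section
/- Let φ : G' → G be a square covering of simple graphs such that G' is a median graph, and let ũ and ũ' be vertices of G' with φ(ũ) = φ(ũ'). Let P₁ = (ũ = ũ₀, ũ₁, …, ũ_k) and P₂ = (ũ = ṽ₀, ṽ₁, …, ṽ_ℓ) be paths in G' starting at ũ, and let P₁' = (ũ' = ũ₀', ũ₁', …, ũ_k') and P₂' = (ũ' = ṽ₀', ṽ₁', …, ṽ_ℓ') be paths in G' starting at ũ' such that φ(ũ_i') = φ(ũ_i) for all 0 ≤ i ≤ k and φ(ṽ_j') = φ(ṽ_j) for all 0 ≤ j ≤ ℓ. Then ũ_k = ṽ_ℓ if and only if ũ_k' = ṽ_ℓ'. -/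
/-- A graph covering map: a locally bijective homomorphism of simple graphs. -/
def IsGraphCovering {V' V : Type} (G' : SimpleGraph V') (G : SimpleGraph V)
    (φ : V' → V) : Prop :=
  (∀ u v : V', G'.Adj u v → G.Adj (φ u) (φ v)) ∧
  ∀ v' : V', Set.BijOn φ (G'.neighborSet v') (G.neighborSet (φ v'))

/-- A square covering: a covering map along which 4-cycles of `G` lift to 4-cycles
of `G'`. -/
def IsSquareCovering {V' V : Type} (G' : SimpleGraph V') (G : SimpleGraph V)
    (φ : V' → V) : Prop :=
  IsGraphCovering G' G φ ∧
  ∀ w₀ w₁ w₂ w₃ : V, G.Adj w₀ w₁ → G.Adj w₁ w₂ → G.Adj w₂ w₃ → G.Adj w₃ w₀ →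
    w₀ ≠ w₂ → w₁ ≠ w₃ →
    ∀ v₀' v₁' v₃' : V', φ v₀' = w₀ →
      G'.Adj v₀' v₁' → φ v₁' = w₁ → G'.Adj v₀' v₃' → φ v₃' = w₃ →
      ∃ v₂' : V', G'.Adj v₁' v₂' ∧ G'.Adj v₃' v₂' ∧ φ v₂' = w₂

/-!
In a modular graph the geodesics from a fixed vertex `u` to a vertex `x` are connected by square
moves: two neighbours of `x` that are both closer to `u` have a common neighbour closer still.
A square covering respects square moves, so all geodesics from `u` to `x`, mapped to the base and
lifted from a given vertex, end at the same vertex, the transport of `x`. Since modular graphs are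
bipartite, each edge joins vertices at different distances from `u`, so it lies on a geodesic from
`u`. Hence transport sends edges to edges, and the lift of an arbitrary path ends at the transport
of its endpoint, which does not depend on the path.
-/

theorem exists_adj_dist_eq_add_one {V : Type*} {G : SimpleGraph V} {u x : V}
    (hreach : G.Reachable u x) (hne : u ≠ x) :
    ∃ a, G.Adj a x ∧ G.dist u x = G.dist u a + 1 := by
  obtain ⟨p, hp⟩ := hreach.symm.exists_walk_length_eq_dist
  cases p with
  | nil => exact absurd rfl hne
  | @cons _ a _ hxa q =>
    have hdist_le : G.dist u x ≤ G.dist u a + 1 := by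
      simpa only [SimpleGraph.dist_eq_one_iff_adj.2 hxa.symm] using
        hxa.symm.reachable.dist_triangle_right u
    have hle : G.dist a u ≤ q.length := SimpleGraph.dist_le q
    rw [SimpleGraph.Walk.length_cons, G.dist_comm] at hp
    rw [G.dist_comm] at hle
    exact ⟨a, hxa.symm, by lia⟩

/-- A modular graph: a connected graph in which every triple of vertices has at least one median.
Median graphs are the modular graphs whose medians are unique. -/
def IsModularGraph {V : Type} (G : SimpleGraph V) : Prop :=
  G.Connected ∧ ∀ x y z : V, ∃ m : V,
    m ∈ gInterval G x y ∧ m ∈ gInterval G y z ∧ m ∈ gInterval G z x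

theorem IsMedianGraph.isModularGraph {V : Type} {G : SimpleGraph V} (hG : IsMedianGraph G) :
    IsModularGraph G :=
  ⟨hG.1, fun x y z ↦ (hG.2 x y z).exists⟩

namespace IsModularGraph

variable {V : Type} {G : SimpleGraph V} {u a b x : V}

theorem exists_midpoint_of_dist_eq (hG : IsModularGraph G) (h : G.dist u a = G.dist u b) :
    ∃ m, G.dist m a = G.dist m b ∧ G.dist a b = 2 * G.dist m a ∧
      G.dist u a = G.dist u m + G.dist m a := by
  obtain ⟨m, hab, hbu, hua⟩ := hG.2 a b u
  simp only [gInterval, Set.mem_ofPred_eq] at hab hbu hua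
  rw [G.dist_comm (u := a) (v := m)] at hab
  rw [G.dist_comm (u := b) (v := m), G.dist_comm (u := m) (v := u),
    G.dist_comm (u := b) (v := u)] at hbu
  exact ⟨m, by lia, by lia, by lia⟩

theorem dist_ne_of_adj (hG : IsModularGraph G) (hab : G.Adj a b) : G.dist u a ≠ G.dist u b := by
  intro h
  obtain ⟨m, -, hdist, -⟩ := hG.exists_midpoint_of_dist_eq h
  rw [SimpleGraph.dist_eq_one_iff_adj.2 hab] at hdist
  lia

theorem dist_eq_add_one_or_of_adj (hG : IsModularGraph G) (hab : G.Adj a b) :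
    G.dist u b = G.dist u a + 1 ∨ G.dist u a = G.dist u b + 1 := by
  have hne : G.dist u a ≠ G.dist u b := hG.dist_ne_of_adj hab
  have hcases := hab.diff_dist_adj (u := u)
  lia

theorem quadrangle_condition (hG : IsModularGraph G) (hne : a ≠ b)
    (hax : G.Adj a x) (hbx : G.Adj b x) (ha : G.dist u x = G.dist u a + 1)
    (hb : G.dist u x = G.dist u b + 1) :
    ∃ m, G.Adj m a ∧ G.Adj m b ∧ G.dist u a = G.dist u m + 1 := by
  obtain ⟨m, hmab, hab, hua⟩ := hG.exists_midpoint_of_dist_eq (u := u) (a := a) (b := b) (by lia)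
  have hle : G.dist a b ≤ 2 := by
    simpa only [SimpleGraph.dist_eq_one_iff_adj.2 hax, SimpleGraph.dist_eq_one_iff_adj.2 hbx.symm]
      using hG.1.dist_triangle (u := a) (v := x) (w := b)
  have hpos : 0 < G.dist a b := hG.1.pos_dist_of_ne hne
  have hma : G.dist m a = 1 := by lia
  exact ⟨m, SimpleGraph.dist_eq_one_iff_adj.1 hma,
    SimpleGraph.dist_eq_one_iff_adj.1 (hmab ▸ hma), hma ▸ hua⟩

end IsModularGraph

section Covering

variable {V' V : Type} {G' : SimpleGraph V'} {G : SimpleGraph V} {ψ : V' → V}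

theorem IsGraphCovering.eq_of_adj_of_adj (hψ : IsGraphCovering G' G ψ) {y a b : V'}
    (ha : G'.Adj y a) (hb : G'.Adj y b) (h : ψ a = ψ b) : a = b :=
  (hψ.2 y).injOn ha hb h

theorem IsGraphCovering.exists_adj_lift (hψ : IsGraphCovering G' G ψ) {y : V'} {w : V}
    (hw : G.Adj (ψ y) w) : ∃ y', G'.Adj y y' ∧ ψ y' = w :=
  (hψ.2 y).surjOn hw

theorem IsSquareCovering.eq_of_adj_adj_of_adj_adj (hψ : IsSquareCovering G' G ψ)
    {c b b' y y' : V'} (hcb : G'.Adj c b) (hby : G'.Adj b y) (hcb' : G'.Adj c b')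
    (hby' : G'.Adj b' y') (h : ψ y = ψ y') : y = y' := by
  have hinj := @hψ.1.eq_of_adj_of_adj
  have hhom := hψ.1.1
  by_cases hcy : ψ c = ψ y
  · exact (hinj hcb.symm hby hcy).symm.trans (hinj hcb'.symm hby' (hcy.trans h))
  by_cases hbb' : ψ b = ψ b'
  · obtain rfl := hinj hcb hcb' hbb'
    exact hinj hby hby' h
  obtain ⟨z, hbz, hbz', hz⟩ := hψ.2 (ψ c) (ψ b) (ψ y) (ψ b') (hhom _ _ hcb) (hhom _ _ hby)
    (h ▸ (hhom _ _ hby').symm) (hhom _ _ hcb').symm hcy hbb' c b b' rfl hcb rfl hcb' rfl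
  exact (hinj hby hbz hz.symm).trans (hinj hbz' hby' (hz.trans h))

end Covering

/-- The transport relation from `u` to `v`: `GeodesicTransport H G' f ψ u v x y` says that for
some geodesic from `u` to `x` in `H`, its image under `f` has a lift along `ψ` that starts at `v`
and ends at `y`. The geodesic and its lift are built one edge at a time. -/
inductive GeodesicTransport {W V' V : Type*} (H : SimpleGraph W) (G' : SimpleGraph V')
    (f : W → V) (ψ : V' → V) (u : W) (v : V') : W → V' → Prop
  | base : GeodesicTransport H G' f ψ u v u v
  | step {x x' : W} {y y' : V'} (h : GeodesicTransport H G' f ψ u v x y) (hx : H.Adj x x')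
      (hy : G'.Adj y y') (himage : f x' = ψ y') (hdist : H.dist u x' = H.dist u x + 1) :
      GeodesicTransport H G' f ψ u v x' y'

namespace GeodesicTransport

section Basic

variable {W V' V : Type*} {H : SimpleGraph W} {G' : SimpleGraph V'} {f : W → V} {ψ : V' → V}
  {u x : W} {v y : V'}

theorem image_eq (huv : f u = ψ v) (h : GeodesicTransport H G' f ψ u v x y) : f x = ψ y := by
  cases h <;> assumption

theorem eq_of_base (h : GeodesicTransport H G' f ψ u v u y) : y = v := by
  cases h with
  | base => rfl
  | step _ _ _ _ hdist => simp at hdist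

theorem exists_step_of_ne (h : GeodesicTransport H G' f ψ u v x y) (hne : x ≠ u) :
    ∃ a b, GeodesicTransport H G' f ψ u v a b ∧ H.Adj a x ∧ G'.Adj b y ∧
      H.dist u x = H.dist u a + 1 := by
  cases h with
  | base => exact absurd rfl hne
  | step h hx hy _ hdist => exact ⟨_, _, h, hx, hy, hdist⟩

end Basic

variable {W V' V : Type} {H : SimpleGraph W} {G' : SimpleGraph V'} {G : SimpleGraph V}
  {f : H →g G} {ψ : V' → V} {u x x' : W} {v y y' : V'}

theorem exists_adj_step (hψ : IsGraphCovering G' G ψ) (huv : f u = ψ v)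
    (h : GeodesicTransport H G' f ψ u v x y) (hx : H.Adj x x')
    (hdist : H.dist u x' = H.dist u x + 1) :
    ∃ y', G'.Adj y y' ∧ GeodesicTransport H G' f ψ u v x' y' := by
  obtain ⟨y', hy, himage⟩ := hψ.exists_adj_lift (h.image_eq huv ▸ f.map_adj hx)
  exact ⟨y', hy, h.step hx hy himage.symm hdist⟩

theorem exists_of_reachable (hψ : IsGraphCovering G' G ψ) (huv : f u = ψ v)
    (hx : H.Reachable u x) : ∃ y, GeodesicTransport H G' f ψ u v x y := by
  induction hn : H.dist u x generalizing x with
  | zero =>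
    obtain rfl := hx.dist_eq_zero_iff.1 hn
    exact ⟨v, base⟩
  | succ n ih =>
    have hne : u ≠ x := by
      rintro rfl
      simp at hn
    obtain ⟨a, hax, hdist⟩ := exists_adj_dist_eq_add_one hx hne
    obtain ⟨b, hab⟩ := ih (hx.trans hax.symm.reachable) (by lia)
    obtain ⟨y, -, hxy⟩ := hab.exists_adj_step hψ huv hax hdist
    exact ⟨y, hxy⟩

theorem unique (hH : IsModularGraph H) (hψ : IsSquareCovering G' G ψ) (huv : f u = ψ v)
    (h : GeodesicTransport H G' f ψ u v x y) (h' : GeodesicTransport H G' f ψ u v x y') :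
    y = y' := by
  induction hn : H.dist u x using Nat.strong_induction_on generalizing x y y' with
  | _ n ih =>
  by_cases hxu : x = u
  · subst hxu
    exact h.eq_of_base.trans h'.eq_of_base.symm
  have himage : ψ y = ψ y' := (h.image_eq huv).symm.trans (h'.image_eq huv)
  obtain ⟨a, b, hab, hax, hby, hdist⟩ := h.exists_step_of_ne hxu
  obtain ⟨a', b', hab', hax', hby', hdist'⟩ := h'.exists_step_of_ne hxu
  by_cases haa' : a = a'
  · subst haa'
    obtain rfl : b = b' := ih _ (by lia) hab hab' rfl
    exact hψ.1.eq_of_adj_of_adj hby hby' himage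
  obtain ⟨m, hma, hma', hm⟩ := hH.quadrangle_condition haa' hax hax' hdist hdist'
  obtain ⟨c, hmc⟩ := exists_of_reachable hψ.1 huv (hH.1 u m)
  have adj_of_step {p : W} {q : V'} (hmp : H.Adj m p) (hpq : GeodesicTransport H G' f ψ u v p q)
      (hp : H.dist u x = H.dist u p + 1) (hup : H.dist u p = H.dist u m + 1) : G'.Adj c q := by
    obtain ⟨q', hcq', hpq'⟩ := hmc.exists_adj_step hψ.1 huv hmp hup
    exact ih _ (by lia) hpq hpq' rfl ▸ hcq'
  exact hψ.eq_of_adj_adj_of_adj_adj (adj_of_step hma hab hdist hm) hby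
    (adj_of_step hma' hab' hdist' (by lia)) hby' himage

theorem of_adj (hH : IsModularGraph H) (hψ : IsSquareCovering G' G ψ) (huv : f u = ψ v)
    (h : GeodesicTransport H G' f ψ u v x y) (hx : H.Adj x x') (hy : G'.Adj y y')
    (himage : f x' = ψ y') : GeodesicTransport H G' f ψ u v x' y' := by
  obtain hup | hdown := hH.dist_eq_add_one_or_of_adj (u := u) hx
  · exact h.step hx hy himage hup
  · obtain ⟨z, hz⟩ := exists_of_reachable hψ.1 huv (hH.1 u x')
    obtain ⟨w, hzw, hw⟩ := hz.exists_adj_step hψ.1 huv hx.symm hdown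
    obtain rfl : y = w := h.unique hH hψ huv hw
    obtain rfl : z = y' :=
      hψ.1.eq_of_adj_of_adj hzw.symm hy ((hz.image_eq huv).symm.trans himage)
    exact hz

theorem of_path (hH : IsModularGraph H) (hψ : IsSquareCovering G' G ψ) {k : ℕ}
    {P : Fin (k + 1) → W} {P' : Fin (k + 1) → V'}
    (hP : ∀ i : Fin k, H.Adj (P i.castSucc) (P i.succ))
    (hP' : ∀ i : Fin k, G'.Adj (P' i.castSucc) (P' i.succ))
    (himage : ∀ i, f (P i) = ψ (P' i)) (i : Fin (k + 1)) :
    GeodesicTransport H G' f ψ (P 0) (P' 0) (P i) (P' i) := by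
  induction i using Fin.induction with
  | zero => exact base
  | succ i ih => exact ih.of_adj hH hψ (himage 0) (hP i) (hP' i) (himage i.succ)

end GeodesicTransport

theorem IsSquareCovering.lift_last_eq_of_last_eq {W V' V : Type} {H : SimpleGraph W}
    {G' : SimpleGraph V'} {G : SimpleGraph V} {f : H →g G} {ψ : V' → V}
    (hψ : IsSquareCovering G' G ψ) (hH : IsModularGraph H) {k ℓ : ℕ}
    {P₁ : Fin (k + 1) → W} {P₂ : Fin (ℓ + 1) → W}
    {P₁' : Fin (k + 1) → V'} {P₂' : Fin (ℓ + 1) → V'}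
    (hP₁ : ∀ i : Fin k, H.Adj (P₁ i.castSucc) (P₁ i.succ))
    (hP₂ : ∀ j : Fin ℓ, H.Adj (P₂ j.castSucc) (P₂ j.succ))
    (hP₁' : ∀ i : Fin k, G'.Adj (P₁' i.castSucc) (P₁' i.succ))
    (hP₂' : ∀ j : Fin ℓ, G'.Adj (P₂' j.castSucc) (P₂' j.succ))
    (hs : P₁ 0 = P₂ 0) (hs' : P₁' 0 = P₂' 0)
    (him₁ : ∀ i, f (P₁ i) = ψ (P₁' i)) (him₂ : ∀ j, f (P₂ j) = ψ (P₂' j))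
    (hlast : P₁ (Fin.last k) = P₂ (Fin.last ℓ)) :
    P₁' (Fin.last k) = P₂' (Fin.last ℓ) := by
  have h₁ := GeodesicTransport.of_path hH hψ hP₁ hP₁' him₁ (Fin.last k)
  have h₂ := GeodesicTransport.of_path hH hψ hP₂ hP₂' him₂ (Fin.last ℓ)
  rw [← hs, ← hs', ← hlast] at h₂
  exact h₁.unique hH hψ (him₁ 0) h₂

theorem square_covering_endpoint_coincidence_general {V₁ V₂ V : Type}
    {G₁ : SimpleGraph V₁} {G₂ : SimpleGraph V₂} {G : SimpleGraph V} {φ : V₁ → V} {ψ : V₂ → V}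
    (hφ : IsSquareCovering G₁ G φ) (hψ : IsSquareCovering G₂ G ψ)
    (hG₁ : IsModularGraph G₁) (hG₂ : IsModularGraph G₂) {k ℓ : ℕ}
    {P₁ : Fin (k + 1) → V₁} {P₂ : Fin (ℓ + 1) → V₁}
    {P₁' : Fin (k + 1) → V₂} {P₂' : Fin (ℓ + 1) → V₂}
    (hP₁ : ∀ i : Fin k, G₁.Adj (P₁ i.castSucc) (P₁ i.succ))
    (hP₂ : ∀ j : Fin ℓ, G₁.Adj (P₂ j.castSucc) (P₂ j.succ))
    (hP₁' : ∀ i : Fin k, G₂.Adj (P₁' i.castSucc) (P₁' i.succ))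
    (hP₂' : ∀ j : Fin ℓ, G₂.Adj (P₂' j.castSucc) (P₂' j.succ))
    (hs : P₁ 0 = P₂ 0) (hs' : P₁' 0 = P₂' 0)
    (him₁ : ∀ i, ψ (P₁' i) = φ (P₁ i)) (him₂ : ∀ j, ψ (P₂' j) = φ (P₂ j)) :
    P₁ (Fin.last k) = P₂ (Fin.last ℓ) ↔ P₁' (Fin.last k) = P₂' (Fin.last ℓ) :=
  ⟨hψ.lift_last_eq_of_last_eq (f := ⟨φ, hφ.1.1 _ _⟩) hG₁ hP₁ hP₂ hP₁' hP₂' hs hs'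
      (fun i ↦ (him₁ i).symm) (fun j ↦ (him₂ j).symm),
    hφ.lift_last_eq_of_last_eq (f := ⟨ψ, hψ.1.1 _ _⟩) hG₂ hP₁' hP₂' hP₁ hP₂ hs' hs him₁ him₂⟩

/-- Let `φ : G' → G` be a square covering with `G'` median, and let `u₁, u₂` be
vertices of `G'` with the same image. Given paths `P₁, P₂` starting at `u₁` and
paths `P₁', P₂'` starting at `u₂` whose images under `φ` agree with those of
`P₁, P₂` pointwise, the endpoints of `P₁` and `P₂` coincide iff the endpoints of
`P₁'` and `P₂'` coincide. -/
theorem square_covering_endpoint_coincidence {V' V : Type}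
    (G' : SimpleGraph V') (G : SimpleGraph V) (φ : V' → V)
    (hφ : IsSquareCovering G' G φ) (hmed : IsMedianGraph G')
    (u₁ u₂ : V') (hsame : φ u₁ = φ u₂) (k ℓ : ℕ)
    (P₁ : Fin (k + 1) → V') (P₂ : Fin (ℓ + 1) → V')
    (P₁' : Fin (k + 1) → V') (P₂' : Fin (ℓ + 1) → V')
    (hP₁ : ∀ i : Fin k, G'.Adj (P₁ i.castSucc) (P₁ i.succ))
    (hP₂ : ∀ j : Fin ℓ, G'.Adj (P₂ j.castSucc) (P₂ j.succ))
    (hP₁' : ∀ i : Fin k, G'.Adj (P₁' i.castSucc) (P₁' i.succ))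
    (hP₂' : ∀ j : Fin ℓ, G'.Adj (P₂' j.castSucc) (P₂' j.succ))
    (hs₁ : P₁ 0 = u₁) (hs₂ : P₂ 0 = u₁) (hs₁' : P₁' 0 = u₂) (hs₂' : P₂' 0 = u₂)
    (him₁ : ∀ i : Fin (k + 1), φ (P₁' i) = φ (P₁ i))
    (him₂ : ∀ j : Fin (ℓ + 1), φ (P₂' j) = φ (P₂ j)) :
    (P₁ (Fin.last k) = P₂ (Fin.last ℓ) ↔ P₁' (Fin.last k) = P₂' (Fin.last ℓ)) := by
  have hmod : IsModularGraph G' := hmed.isModularGraph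
  exact square_covering_endpoint_coincidence_general hφ hφ hmod hmod hP₁ hP₂ hP₁' hP₂'
    (hs₁.trans hs₂.symm) (hs₁'.trans hs₂'.symm) him₁ him₂
end

section
/- Let T be a Wang tile set. If there exists a valid tiling f of ℤ² by T that is periodic — i.e., there is (a,b) ∈ ℤ² ∖ {(0,0)} with f(x+a, y+b) = f(x,y) for all (x,y) ∈ ℤ² — then there exists a valid doubly periodic tiling of ℤ² by T: a valid tiling g and integers a', b' > 0 such that g(x+a', y) = g(x, y+b') = g(x,y) for all (x,y) ∈ ℤ². -/
/-!
Cut a tiling with period `(a, b)`, `b > 0`, down to the strip `0 ≤ y < b`. The strip is a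
bi-infinite word over the finite alphabet of columns of height `b`, and it determines the tiling:
each further strip is the previous one shifted by `a`. Matching rules on the tiling become
finite-range rules on this word. By pigeonhole some long window of the word repeats, and repeating
forever the segment between its two occurrences gives a periodic word in which only windows of the
old word occur. If this word has period `p`, stacking its shifts gives a tiling with periods
`(p, 0)` and `(0, b * p)` all of whose small patterns occur in the original tiling. If `b = 0`,
exchange the axes.
-/

/-- Every pattern of shape `F` in the configuration `v` occurs in the configuration `u`. Hence `v`
satisfies every translation-invariant rule on patterns of shape `F` which `u` satisfies. -/
def PatternsOccurIn {G α : Type*} [Add G] (F : Finset G) (v u : G → α) : Prop :=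
  ∀ x, ∃ k, ∀ i ∈ F, v (x + i) = u (k + i)

section Words

variable {Q : Type*}

theorem exists_window_repetition [Finite Q] (u : ℤ → Q) (n : ℤ) :
    ∃ c p : ℤ, 0 < p ∧ ∀ i, 0 ≤ i → i < n → u (c + p + i) = u (c + i) := by
  let window (k : ℤ) (i : Set.Ico 0 n) : Q := u (k + i)
  obtain ⟨k, -, l, -, hkl, hwindow⟩ := Set.infinite_univ.exists_lt_map_eq_of_mapsTo
    (Set.mapsTo_univ window Set.univ) Set.finite_univ
  refine ⟨k, l - k, sub_pos.2 hkl, fun i hi₀ hin => ?_⟩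
  rw [add_sub_cancel]
  exact (congrFun hwindow ⟨i, hi₀, hin⟩).symm

theorem apply_add_emod_of_window_repetition {u : ℤ → Q} {c p n : ℤ} (hp : 0 < p)
    (hrep : ∀ i, 0 ≤ i → i < n → u (c + p + i) = u (c + i)) {t : ℤ} (ht₀ : 0 ≤ t)
    (ht : t < p + n) : u (c + t % p) = u (c + t) := by
  rcases lt_or_ge t p with htp | hpt
  · rw [Int.emod_eq_of_lt ht₀ htp]
  · calc u (c + t % p) = u (c + (t - p) % p) := by rw [Int.sub_emod_right]
      _ = u (c + (t - p)) :=
        apply_add_emod_of_window_repetition hp hrep (by lia) (by lia)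
      _ = u (c + p + (t - p)) := (hrep _ (by lia) (by lia)).symm
      _ = u (c + t) := by congr 1; ring
termination_by t.toNat

theorem exists_periodic_patternsOccurIn_Ico [Finite Q] (u : ℤ → Q) (n : ℤ) :
    ∃ (v : ℤ → Q) (p : ℤ), 0 < p ∧ Function.Periodic v p ∧
      PatternsOccurIn (Finset.Ico 0 n) v u := by
  obtain ⟨c, p, hp, hrep⟩ := exists_window_repetition u n
  refine ⟨fun x => u (c + x % p), p, hp, fun x => by simp only [Int.add_emod_right],
    fun x => ⟨c + x % p, fun i hi => ?_⟩⟩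
  obtain ⟨hi₀, hin⟩ := Finset.mem_Ico.1 hi
  have hx₀ := Int.emod_nonneg x hp.ne'
  have hxp := Int.emod_lt_of_pos x hp
  calc u (c + (x + i) % p) = u (c + (x % p + i) % p) := by rw [Int.emod_add_emod]
    _ = u (c + (x % p + i)) :=
      apply_add_emod_of_window_repetition hp hrep (by lia) (by lia)
    _ = u (c + x % p + i) := by rw [add_assoc]

theorem exists_periodic_patternsOccurIn [Finite Q] (u : ℤ → Q) (F : Finset ℤ) :
    ∃ (v : ℤ → Q) (p : ℤ), 0 < p ∧ Function.Periodic v p ∧ PatternsOccurIn F v u := by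
  obtain ⟨m, hm⟩ := F.bddBelow
  obtain ⟨M, hM⟩ := F.bddAbove
  obtain ⟨v, p, hp, hper, hv⟩ := exists_periodic_patternsOccurIn_Ico u (M + 1 - m)
  refine ⟨v, p, hp, hper, fun x => ?_⟩
  obtain ⟨k, hk⟩ := hv (x + m)
  refine ⟨k - m, fun i hi => ?_⟩
  have hmi := hm hi
  have hiM := hM hi
  convert hk (i - m) (Finset.mem_Ico.2 ⟨by lia, by lia⟩) using 2 <;> ring

end Words

section Strips

variable {T : Type*} {a b : ℤ}

/-- The configuration of the plane obtained from the configuration `v` of the strip `0 ≤ y < b`,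
given as its sequence of columns, by placing a copy of it translated by `q • (a, b)` for each
integer `q`. -/
def unrollStrip (a : ℤ) (hb : 0 < b) (v : ℤ → Set.Ico 0 b → T) (z : ℤ × ℤ) : T :=
  v (z.1 - a * (z.2 / b))
    ⟨z.2 % b, Int.emod_nonneg z.2 hb.ne', Int.emod_lt_of_pos z.2 hb⟩

theorem unrollStrip_restrict_of_periodic (hb : 0 < b) {f : ℤ × ℤ → T}
    (hf : Function.Periodic f (a, b)) :
    unrollStrip a hb (fun x (j : Set.Ico 0 b) => f (x, j)) = f := by
  funext z
  calc f (z.1 - a * (z.2 / b), z.2 % b) = f (z - (z.2 / b) • (a, b)) := by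
        congr 1
        ext <;> simp [Int.emod_def, mul_comm]
    _ = f z := hf.sub_zsmul_eq _

theorem periodic_unrollStrip_horizontal (hb : 0 < b) {v : ℤ → Set.Ico 0 b → T} {p : ℤ}
    (hv : Function.Periodic v p) : Function.Periodic (unrollStrip a hb v) (p, 0) := by
  intro z
  simp only [unrollStrip, Prod.fst_add, Prod.snd_add, add_zero, add_sub_right_comm, hv _]

theorem periodic_unrollStrip_vertical (hb : 0 < b) {v : ℤ → Set.Ico 0 b → T} {p : ℤ}
    (hv : Function.Periodic v p) : Function.Periodic (unrollStrip a hb v) (0, b * p) := by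
  intro z
  have hshift : z.1 - a * (z.2 / b + p) = z.1 - a * (z.2 / b) - a • p := by
    rw [smul_eq_mul]; ring
  simp only [unrollStrip, Prod.fst_add, Prod.snd_add, add_zero, Int.add_mul_emod_self_left,
    Int.add_mul_ediv_left _ _ hb.ne', hshift, hv.sub_zsmul_eq]

/-- The horizontal offsets in a strip which patterns of shape `F` involve once the strip is
unrolled; `s` is the height inside the strip of the base point of the pattern. -/
noncomputable def stripShape (a b : ℤ) (F : Finset (ℤ × ℤ)) : Finset ℤ :=
  (F ×ˢ Finset.Ico 0 b).image fun (d, s) => d.1 - a * ((s + d.2) / b)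

theorem patternsOccurIn_unrollStrip (hb : 0 < b) {F : Finset (ℤ × ℤ)}
    {v u : ℤ → Set.Ico 0 b → T} (h : PatternsOccurIn (stripShape a b F) v u) :
    PatternsOccurIn F (unrollStrip a hb v) (unrollStrip a hb u) := by
  rintro ⟨x, y⟩
  obtain ⟨k, hk⟩ := h (x - a * (y / b))
  refine ⟨(k + a * (y / b), y), fun d hd => ?_⟩
  have hmem : d.1 - a * ((y % b + d.2) / b) ∈ stripShape a b F :=
    Finset.mem_image.2 ⟨(d, y % b), Finset.mk_mem_product hd
      (Finset.mem_Ico.2 ⟨Int.emod_nonneg y hb.ne', Int.emod_lt_of_pos y hb⟩), rfl⟩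
  have hdiv : (y + d.2) / b = (y % b + d.2) / b + y / b := by
    rw [← Int.add_mul_ediv_left _ _ hb.ne', add_right_comm, Int.emod_add_mul_ediv]
  have hoffset_v : x + d.1 - a * ((y + d.2) / b) =
      x - a * (y / b) + (d.1 - a * ((y % b + d.2) / b)) := by rw [hdiv]; ring
  have hoffset_u : k + a * (y / b) + d.1 - a * ((y + d.2) / b) =
      k + (d.1 - a * ((y % b + d.2) / b)) := by rw [hdiv]; ring
  simp only [unrollStrip, Prod.fst_add, Prod.snd_add, hoffset_v, hoffset_u, hk _ hmem]

end Strips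

section Plane

/-- Invariance of a configuration of the plane under some horizontal and some vertical translation;
equivalently, under a lattice of translations of rank two. -/
def IsDoublyPeriodic {T : Type*} (g : ℤ × ℤ → T) : Prop :=
  ∃ m n : ℤ, 0 < m ∧ 0 < n ∧ Function.Periodic g (m, 0) ∧ Function.Periodic g (0, n)

theorem IsDoublyPeriodic.comp_swap {T : Type*} {g : ℤ × ℤ → T} (hg : IsDoublyPeriodic g) :
    IsDoublyPeriodic (g ∘ Prod.swap) := by
  obtain ⟨m, n, hm, hn, hgm, hgn⟩ := hg
  exact ⟨n, m, hn, hm, fun z => hgn z.swap, fun z => hgm z.swap⟩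

theorem isDoublyPeriodic_unrollStrip {T : Type*} {a b p : ℤ} (hb : 0 < b)
    {v : ℤ → Set.Ico 0 b → T} (hp : 0 < p) (hv : Function.Periodic v p) :
    IsDoublyPeriodic (unrollStrip a hb v) :=
  ⟨p, b * p, hp, mul_pos hb hp, periodic_unrollStrip_horizontal hb hv,
    periodic_unrollStrip_vertical hb hv⟩

variable {T : Type*} [Finite T]

theorem exists_doublyPeriodic_patternsOccurIn_of_snd_pos {f : ℤ × ℤ → T} {a b : ℤ} (hb : 0 < b)
    (hf : Function.Periodic f (a, b)) (F : Finset (ℤ × ℤ)) :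
    ∃ g : ℤ × ℤ → T, IsDoublyPeriodic g ∧ PatternsOccurIn F g f := by
  obtain ⟨v, p, hp, hper, hv⟩ := exists_periodic_patternsOccurIn
    (fun x (j : Set.Ico 0 b) => f (x, j)) (stripShape a b F)
  refine ⟨unrollStrip a hb v, isDoublyPeriodic_unrollStrip hb hp hper, ?_⟩
  simpa only [unrollStrip_restrict_of_periodic hb hf] using patternsOccurIn_unrollStrip hb hv

theorem exists_doublyPeriodic_patternsOccurIn_of_snd_ne_zero {f : ℤ × ℤ → T} {a b : ℤ}
    (hb : b ≠ 0) (hf : Function.Periodic f (a, b)) (F : Finset (ℤ × ℤ)) :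
    ∃ g : ℤ × ℤ → T, IsDoublyPeriodic g ∧ PatternsOccurIn F g f := by
  rcases hb.lt_or_gt with hneg | hpos
  · exact exists_doublyPeriodic_patternsOccurIn_of_snd_pos (neg_pos.2 hneg) hf.neg F
  · exact exists_doublyPeriodic_patternsOccurIn_of_snd_pos hpos hf F

theorem exists_doublyPeriodic_patternsOccurIn {f : ℤ × ℤ → T} {c : ℤ × ℤ} (hc : c ≠ 0)
    (hf : Function.Periodic f c) (F : Finset (ℤ × ℤ)) :
    ∃ g : ℤ × ℤ → T, IsDoublyPeriodic g ∧ PatternsOccurIn F g f := by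
  by_cases hc₂ : c.2 = 0
  · have hc₁ : c.1 ≠ 0 := fun hc₁ => hc (Prod.ext hc₁ hc₂)
    have hf_swap : Function.Periodic (f ∘ Prod.swap) c.swap := fun z => hf z.swap
    obtain ⟨g, hg, hocc⟩ :=
      exists_doublyPeriodic_patternsOccurIn_of_snd_ne_zero hc₁ hf_swap (F.image Prod.swap)
    refine ⟨g ∘ Prod.swap, hg.comp_swap, fun z => ?_⟩
    obtain ⟨w, hw⟩ := hocc z.swap
    exact ⟨w.swap, fun d hd => hw d.swap (Finset.mem_image_of_mem _ hd)⟩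
  · exact exists_doublyPeriodic_patternsOccurIn_of_snd_ne_zero hc₂ hf F

end Plane

/-- If a Wang tile set `T` (a finite nonempty set of tiles with top/right/bottom/left
edge colors `N, E, S, W` taken in a finite set of colors `C`) admits a valid tiling
of `ℤ²` that is periodic with some period `(a,b) ≠ (0,0)`, then it admits a valid
doubly periodic tiling of `ℤ²`: a valid tiling invariant under the translations by
`(a',0)` and `(0,b')` for some integers `a', b' > 0`. -/
theorem wang_periodic_implies_doubly_periodic {T C : Type} [Finite T] [Nonempty T]
    [Finite C] (N E S W : T → C) (f : ℤ → ℤ → T)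
    (hE : ∀ x y : ℤ, E (f x y) = W (f (x + 1) y))
    (hN : ∀ x y : ℤ, N (f x y) = S (f x (y + 1)))
    (a b : ℤ) (hab : ¬(a = 0 ∧ b = 0))
    (hper : ∀ x y : ℤ, f (x + a) (y + b) = f x y) :
    ∃ g : ℤ → ℤ → T, ∃ a' b' : ℤ, 0 < a' ∧ 0 < b' ∧
      (∀ x y : ℤ, E (g x y) = W (g (x + 1) y)) ∧
      (∀ x y : ℤ, N (g x y) = S (g x (y + 1))) ∧
      (∀ x y : ℤ, g (x + a') y = g x y) ∧
      (∀ x y : ℤ, g x (y + b') = g x y) := by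
  have hf : Function.Periodic (fun z : ℤ × ℤ => f z.1 z.2) (a, b) := fun z => hper z.1 z.2
  have hab_ne : (a, b) ≠ (0 : ℤ × ℤ) := fun h => hab (Prod.mk.inj h)
  obtain ⟨g, ⟨m, n, hm, hn, hgm, hgn⟩, hocc⟩ :=
    exists_doublyPeriodic_patternsOccurIn hab_ne hf {(0, 0), (1, 0), (0, 1)}
  have hlocal (x y : ℤ) : ∃ x' y', g (x, y) = f x' y' ∧ g (x + 1, y) = f (x' + 1) y' ∧
      g (x, y + 1) = f x' (y' + 1) := by
    obtain ⟨w, hw⟩ := hocc (x, y)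
    exact ⟨w.1, w.2, by simpa using hw⟩
  refine ⟨fun x y => g (x, y), m, n, hm, hn, fun x y => ?_, fun x y => ?_,
    fun x y => by simpa using hgm (x, y), fun x y => by simpa using hgn (x, y)⟩
  · obtain ⟨x', y', h, h_right, -⟩ := hlocal x y
    simpa only [h, h_right] using hE x' y'
  · obtain ⟨x', y', h, -, h_up⟩ := hlocal x y
    simpa only [h, h_up] using hN x' y'
end
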